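/- arXiv:2202.08308 — 2 statements merged into one kernel-verified Lean document; each statement's English description precedes it below -/
import Mathlib

section
/- Let n be any positive integer and λ any infinite cardinal, and let 𝓘_λ^n carry a shift-continuous T₁-topology (so that it is a T₁-semitopological semigroup). Then the following conditions are equivalent: (i) 𝓘_λ^n is compact; (ii) 𝓘_λ^n is ω-bounded-pracompact; (iii) 𝓘_λ^n is feebly ω-bounded. -/
/-!
For a pair `p`, sandwiching `x` between two rank-one idempotents yields a fixed rank-one element
or zero according to whether `p` lies in the graph of `x`.  Hence every shift-continuous
`T₁`-topology is finer than the topology of pointwise convergence of graphs: the indicator of the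
graph is a continuous injection into the compact space `σₙ(2^(γ × γ))` of sets of at most `n` pairs.

Elements of rank `n` are isolated, since finitely many pairs determine them, and they are
pointwise dense, since fresh fixed points can be added to any element.  The space `σₙ(2^E)` is
Fréchet–Urysohn, so each element is a pointwise limit of a sequence of isolated points.  A compact
set through countably many such points contains their pointwise limits; feeble ω-boundedness
therefore places every sequence in a compact set.  A continuous map with this property into
a sequential Hausdorff space is closed, so the injection is a closed embedding into a compact space.
-/

open Set Topology Filter

/-- The symmetric inverse semigroup `𝓘_γ^n` of partial bijections of the set `γ`
of rank `≤ n`, represented by their (finite) graphs. -/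
structure SymInvSg (γ : Type*) (n : ℕ) where
  graph : Set (γ × γ)
  inj' : ∀ ⦃x y x' y'⦄, (x, y) ∈ graph → (x', y') ∈ graph → (x = x' ↔ y = y')
  finite' : graph.Finite
  card_le' : graph.ncard ≤ n

namespace SymInvSg

variable {γ : Type*} {n : ℕ}

theorem ext' {a b : SymInvSg γ n} (h : a.graph = b.graph) : a = b := by
  cases a; cases b; simpa using h

/-- Composition of partial bijections (in the left-to-right convention of
transformation semigroups, the choice of convention being immaterial). -/
instance : Mul (SymInvSg γ n) where
  mul a b :=
    { graph := {p | ∃ y, (p.1, y) ∈ a.graph ∧ (y, p.2) ∈ b.graph}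
      inj' := by
        rintro x z x' z' ⟨y, hxy, hyz⟩ ⟨y', hxy', hyz'⟩
        constructor
        · rintro rfl
          have hy : y = y' := (a.inj' hxy hxy').mp rfl
          subst hy
          exact (b.inj' hyz hyz').mp rfl
        · rintro rfl
          have hy : y = y' := (b.inj' hyz hyz').mpr rfl
          subst hy
          exact (a.inj' hxy hxy').mpr rfl
      finite' := by
        have : {p : γ × γ | ∃ y, (p.1, y) ∈ a.graph ∧ (y, p.2) ∈ b.graph} ⊆
            (fun q : (γ × γ) × (γ × γ) => (q.1.1, q.2.2)) '' (a.graph ×ˢ b.graph) := by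
          rintro ⟨x, z⟩ ⟨y, hxy, hyz⟩
          exact ⟨((x, y), (y, z)), ⟨hxy, hyz⟩, rfl⟩
        exact Set.Finite.subset (Set.Finite.image _ (a.finite'.prod b.finite')) this
      card_le' := by
        have hinj : Set.InjOn Prod.fst
            {p : γ × γ | ∃ y, (p.1, y) ∈ a.graph ∧ (y, p.2) ∈ b.graph} := by
          rintro ⟨x, z⟩ ⟨y, hxy, hyz⟩ ⟨x', z'⟩ ⟨y', hxy', hyz'⟩ h
          simp only at h
          subst h
          have hy : y = y' := (a.inj' hxy hxy').mp rfl
          subst hy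
          have hz : z = z' := (b.inj' hyz hyz').mp rfl
          simp [hz]
        calc ({p : γ × γ | ∃ y, (p.1, y) ∈ a.graph ∧ (y, p.2) ∈ b.graph}).ncard
            ≤ (Prod.fst '' a.graph).ncard := by
              refine Set.ncard_le_ncard_of_injOn Prod.fst ?_ hinj (a.finite'.image _)
              rintro ⟨x, z⟩ hp
              exact ⟨(x, hp.choose), hp.choose_spec.1, rfl⟩
          _ ≤ a.graph.ncard := Set.ncard_image_le a.finite'
          _ ≤ n := a.card_le' }

theorem mul_graph (a b : SymInvSg γ n) :
    (a * b).graph = {p : γ × γ | ∃ y, (p.1, y) ∈ a.graph ∧ (y, p.2) ∈ b.graph} := rfl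

instance : Semigroup (SymInvSg γ n) where
  mul_assoc a b c := by
    refine ext' ?_
    simp only [mul_graph]
    ext ⟨x, w⟩
    constructor
    · rintro ⟨z, ⟨y, hxy, hyz⟩, hzw⟩
      exact ⟨y, hxy, z, hyz, hzw⟩
    · rintro ⟨y, hxy, z, hyz, hzw⟩
      exact ⟨z, ⟨y, hxy, hyz⟩, hzw⟩

/-- The zero of `𝓘_γ^n` is the empty partial map. -/
instance : Zero (SymInvSg γ n) :=
  ⟨{ graph := ∅
     inj' := by simp
     finite' := Set.finite_empty
     card_le' := by simp }⟩

/-- The natural partial order on the inverse semigroup `𝓘_γ^n`: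
`α ≼ β` iff the graph of `α` is contained in the graph of `β`. -/
instance : PartialOrder (SymInvSg γ n) where
  le a b := a.graph ⊆ b.graph
  le_refl a := subset_rfl
  le_trans a b c h₁ h₂ := Set.Subset.trans h₁ h₂
  le_antisymm a b h₁ h₂ := ext' (subset_antisymm h₁ h₂)

/-- The rank of a partial bijection: the cardinality of its domain
(equivalently, of its graph). -/
noncomputable def rank (a : SymInvSg γ n) : ℕ := a.graph.ncard

/-- `𝓘_A^n`: the subsemigroup of partial bijections with domain and range inside `A`. -/
def restrictedTo (A : Set γ) : Set (SymInvSg γ n) :=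
  {α | ∀ p ∈ α.graph, p.1 ∈ A ∧ p.2 ∈ A}

end SymInvSg

/-- A topology is shift-continuous when all left and right translations are continuous,
i.e. the space is a semitopological semigroup. -/
def ShiftContinuous (X : Type*) [TopologicalSpace X] [Mul X] : Prop :=
  ∀ a : X, Continuous (fun x => a * x) ∧ Continuous (fun x => x * a)

/-- A space is feebly compact if every locally finite family of nonempty open sets is finite. -/
def FeeblyCompact (X : Type*) [TopologicalSpace X] : Prop :=
  ∀ F : Set (Set X), (∀ U ∈ F, IsOpen U ∧ U.Nonempty) →
    LocallyFinite (fun U : F => (U : Set X)) → F.Finite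

/-- A space is sequentially pracompact if it has a dense subset `D` such that every
sequence in `D` has a convergent subsequence. -/
def SequentiallyPracompact (X : Type*) [TopologicalSpace X] : Prop :=
  ∃ D : Set X, Dense D ∧ ∀ u : ℕ → X, (∀ k, u k ∈ D) →
    ∃ (x : X) (φ : ℕ → ℕ), StrictMono φ ∧ Filter.Tendsto (u ∘ φ) Filter.atTop (nhds x)

/-- A space is totally countably pracompact if it has a dense subset `D` such that every
sequence in `D` has a subsequence whose closure is compact. -/
def TotallyCountablyPracompact (X : Type*) [TopologicalSpace X] : Prop :=
  ∃ D : Set X, Dense D ∧ ∀ u : ℕ → X, (∀ k, u k ∈ D) →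
    ∃ φ : ℕ → ℕ, StrictMono φ ∧ IsCompact (closure (Set.range (u ∘ φ)))

/-- A space is countably pracompact if it has a dense subset `A` such that every infinite
subset of `A` has an accumulation point in the space. -/
def CountablyPracompact (X : Type*) [TopologicalSpace X] : Prop :=
  ∃ A : Set X, Dense A ∧ ∀ B ⊆ A, B.Infinite → ∃ x : X, AccPt x (Filter.principal B)

/-- A space is ω-bounded-pracompact if it has a dense subset `D` such that every countable
subset of `D` has compact closure. -/
def OmegaBoundedPracompact (X : Type*) [TopologicalSpace X] : Prop :=
  ∃ D : Set X, Dense D ∧ ∀ C ⊆ D, C.Countable → IsCompact (closure C)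

/-- A space is feebly ω-bounded if for every sequence of nonempty open sets there is a
compact set meeting all of them. -/
def FeeblyOmegaBounded (X : Type*) [TopologicalSpace X] : Prop :=
  ∀ U : ℕ → Set X, (∀ k, IsOpen (U k) ∧ (U k).Nonempty) →
    ∃ K : Set X, IsCompact K ∧ ∀ k, (K ∩ U k).Nonempty

namespace OmegaBoundedPracompact

theorem of_compactSpace (X : Type*) [TopologicalSpace X] [CompactSpace X] :
    OmegaBoundedPracompact X :=
  ⟨univ, dense_univ, fun _ _ _ => isClosed_closure.isCompact⟩

theorem feeblyOmegaBounded {X : Type*} [TopologicalSpace X] (h : OmegaBoundedPracompact X) :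
    FeeblyOmegaBounded X := by
  obtain ⟨D, hD, hC⟩ := h
  intro U hU
  choose x hxU hxD using fun k => hD.inter_open_nonempty (U k) (hU k).1 (hU k).2
  exact ⟨closure (range x), hC _ (range_subset_iff.2 hxD) (countable_range x),
    fun k => ⟨x k, subset_closure (mem_range_self k), hxU k⟩⟩

end OmegaBoundedPracompact

section ContinuousInjection

variable {X Y : Type*} [TopologicalSpace X] [TopologicalSpace Y] [T2Space Y] {f : X → Y}

theorem isClosedMap_of_forall_seq_mem_isCompact [SequentialSpace Y] (hf : Continuous f)
    (hX : ∀ u : ℕ → X, ∃ K, IsCompact K ∧ ∀ k, u k ∈ K) : IsClosedMap f := by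
  intro C hC
  refine IsSeqClosed.isClosed fun v y hv hvy => ?_
  choose u huC huv using hv
  obtain ⟨K, hK, huK⟩ := hX u
  obtain ⟨x, ⟨-, hxC⟩, hx⟩ := hK.inter_right hC (f := map u atTop)
    (le_principal_iff.2 (mem_map.2 (univ_mem' fun k => ⟨huK k, huC k⟩)))
  have hfx : MapClusterPt (f x) atTop v :=
    (funext huv : f ∘ u = v) ▸ MapClusterPt.continuousAt_comp hf.continuousAt hx
  exact ⟨x, hxC, eq_of_nhds_neBot (ClusterPt.mono hfx hvy)⟩

namespace FeeblyOmegaBounded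

theorem exists_isCompact_forall_mem_of_isOpen_singleton (hX : FeeblyOmegaBounded X)
    {v : ℕ → X} (hv : ∀ k, IsOpen {v k}) : ∃ K, IsCompact K ∧ ∀ k, v k ∈ K := by
  obtain ⟨K, hK, hvK⟩ := hX (fun k => {v k}) fun k => ⟨hv k, singleton_nonempty _⟩
  exact ⟨K, hK, fun k => inter_singleton_nonempty.1 (hvK k)⟩

theorem exists_isCompact_forall_mem [FrechetUrysohnSpace Y] (hX : FeeblyOmegaBounded X)
    (hf : Continuous f) (hinj : Function.Injective f) {D : Set X} (hD : ∀ x ∈ D, IsOpen {x})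
    (hfD : ∀ x, f x ∈ closure (f '' D)) (u : ℕ → X) : ∃ K, IsCompact K ∧ ∀ k, u k ∈ K := by
  have happrox : ∀ k, ∃ v : ℕ → X, (∀ j, v j ∈ D) ∧ Tendsto (f ∘ v) atTop (𝓝 (f (u k))) := by
    intro k
    obtain ⟨w, hwD, hw⟩ := mem_closure_iff_seq_limit.1 (hfD (u k))
    choose v hvD hvw using hwD
    exact ⟨v, hvD, (funext hvw : f ∘ v = w) ▸ hw⟩
  choose v hvD hv using happrox
  obtain ⟨K, hK, hvK⟩ := hX.exists_isCompact_forall_mem_of_isOpen_singleton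
    (v := fun m => v m.unpair.1 m.unpair.2) fun m => hD _ (hvD _ _)
  have hvK' : ∀ k j, v k j ∈ K := fun k j => by
    simpa only [Nat.unpair_pair] using hvK (Nat.pair k j)
  refine ⟨K, hK, fun k => (hinj.mem_set_image).1 ?_⟩
  exact (hK.image hf).isClosed.mem_of_tendsto (hv k)
    (Eventually.of_forall fun j => mem_image_of_mem f (hvK' k j))

theorem compactSpace_of_continuous_injective [FrechetUrysohnSpace Y] [CompactSpace Y]
    (hX : FeeblyOmegaBounded X) (hf : Continuous f) (hinj : Function.Injective f) {D : Set X}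
    (hD : ∀ x ∈ D, IsOpen {x}) (hfD : ∀ x, f x ∈ closure (f '' D)) : CompactSpace X :=
  (IsClosedEmbedding.of_continuous_injective_isClosedMap hf hinj
    (isClosedMap_of_forall_seq_mem_isCompact hf
      (hX.exists_isCompact_forall_mem hf hinj hD hfD))).compactSpace

end FeeblyOmegaBounded

end ContinuousInjection

section DiscreteProduct

variable {ι : Type*} {M : ι → Type*} [∀ i, TopologicalSpace (M i)] [∀ i, DiscreteTopology (M i)]
  {s : Set (∀ i, M i)} {x : ∀ i, M i}

theorem mem_closure_pi_discrete_iff :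
    x ∈ closure s ↔ ∀ t : Set ι, t.Finite → ∃ g ∈ s, ∀ i ∈ t, g i = x i := by
  have hbasis : (𝓝 x).HasBasis Set.Finite fun t : Set ι => {g | ∀ i ∈ t, g i = x i} := by
    simpa only [nhds_pi, nhds_discrete, Set.pi, mem_singleton_iff] using hasBasis_pi_pure x
  exact mem_closure_iff_nhds_basis hbasis

theorem exists_seq_tendsto_of_mem_closure_of_eventuallyEq_cofinite (hx : x ∈ closure s)
    (hs : ∀ g ∈ s, ∀ᶠ i in cofinite, g i = x i) :
    ∃ u : ℕ → ∀ i, M i, (∀ k, u k ∈ s) ∧ Tendsto u atTop (𝓝 x) := by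
  have hstep : ∀ t : Finset (∀ i, M i), (∀ g ∈ t, g ∈ s) →
      ∃ h ∈ s, ∀ g ∈ t, ∀ i, g i ≠ x i → h i = x i := by
    intro t ht
    obtain ⟨h, hh, heq⟩ := mem_closure_pi_discrete_iff.1 hx _
      (t.finite_toSet.biUnion fun g hg => hs g (ht g hg))
    exact ⟨h, hh, fun g hg i hi => heq i (mem_biUnion hg hi)⟩
  obtain ⟨u, hus, hu⟩ := exists_seq_of_forall_finset_exists _ _ hstep
  refine ⟨u, hus, tendsto_pi_nhds.2 fun i => tendsto_nhds_of_eventually_eq ?_⟩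
  by_cases h : ∃ m, u m i ≠ x i
  · obtain ⟨m, hm⟩ := h
    exact (eventually_gt_atTop m).mono fun k hk => hu m k hk i hm
  · exact Eventually.of_forall (not_exists_not.1 h)

end DiscreteProduct

/-- The space `σₙ(2^E)` of subsets of `E` with at most `n` elements, a subspace of the Cantor cube
`2^E`.  Sets are encoded by their Boolean indicators, and `encard` excludes infinite sets. -/
def sigmaCube (E : Type*) (n : ℕ) : Set (E → Bool) :=
  {g | {i | g i = true}.encard ≤ n}

namespace sigmaCube

variable {E : Type*} {n : ℕ}

theorem isClosed : IsClosed (sigmaCube E n) := by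
  refine isClosed_of_closure_subset fun x hx => ?_
  by_contra hcard
  obtain ⟨t, htx, ht⟩ := exists_subset_encard_eq (Order.add_one_le_of_lt (not_le.1 hcard))
  obtain ⟨g, hg, hgx⟩ := mem_closure_pi_discrete_iff.1 hx t
    (finite_of_encard_eq_coe (k := n + 1) (by exact_mod_cast ht))
  have htg : t ⊆ {i | g i = true} := fun i hi => (hgx i hi).trans (htx hi)
  have hle : ((n + 1 : ℕ) : ℕ∞) ≤ n := by
    exact_mod_cast ht ▸ (encard_le_encard htg).trans hg
  exact absurd (Nat.cast_le.1 hle) n.not_succ_le_self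

instance : CompactSpace (sigmaCube E n) :=
  isCompact_iff_compactSpace.1 isClosed.isCompact

theorem eventually_cofinite_eq_false {g : E → Bool} (hg : g ∈ sigmaCube E n) :
    ∀ᶠ i in cofinite, g i = false := by
  simpa only [eventually_cofinite, Bool.not_eq_false] using finite_of_encard_le_coe hg

theorem mem_closure_iff {s : Set (sigmaCube E n)} {x : sigmaCube E n} :
    x ∈ closure s ↔ ∀ t : Set E, t.Finite → ∃ g ∈ s, ∀ i ∈ t, g.1 i = x.1 i := by
  rw [closure_subtype, mem_closure_pi_discrete_iff]
  simp only [exists_mem_image]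

instance : FrechetUrysohnSpace (sigmaCube E n) where
  closure_subset_seqClosure s x hx := by
    obtain ⟨u, hus, hu⟩ := exists_seq_tendsto_of_mem_closure_of_eventuallyEq_cofinite
      (closure_subtype.1 hx) (by
        rintro _ ⟨g, -, rfl⟩
        filter_upwards [eventually_cofinite_eq_false g.2, eventually_cofinite_eq_false x.2]
          with i hg hx
        rw [hg, hx])
    choose v hvs hvu using hus
    exact ⟨v, hvs, tendsto_subtype_rng.2 ((funext hvu : (fun k => (v k).1) = u) ▸ hu)⟩

end sigmaCube

namespace SymInvSg

/-- The rank-one partial bijection sending `a` to `b`, used to test membership of `(a, b)` in the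
graph of an element by multiplication. -/
def single {γ : Type*} {n : ℕ} (hn : 0 < n) (a b : γ) : SymInvSg γ n where
  graph := {(a, b)}
  inj' := by
    rintro x y x' y' ⟨⟩ ⟨⟩
    simp only
  finite' := finite_singleton _
  card_le' := (ncard_singleton _).trans_le hn

variable {γ : Type*} {n : ℕ}

theorem mem_graph_single_mul_mul_single (hn : 0 < n) (a b : γ) (x : SymInvSg γ n) (p : γ × γ) :
    p ∈ (single hn a a * x * single hn b b).graph ↔ p = (a, b) ∧ (a, b) ∈ x.graph := by
  obtain ⟨c, d⟩ := p
  simp only [mul_graph, single, mem_singleton_iff, Prod.mk.injEq, mem_ofPred_eq]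
  constructor
  · rintro ⟨y, ⟨z, ⟨rfl, rfl⟩, hz⟩, rfl, rfl⟩
    exact ⟨⟨rfl, rfl⟩, hz⟩
  · rintro ⟨⟨rfl, rfl⟩, h⟩
    exact ⟨d, ⟨c, ⟨rfl, rfl⟩, h⟩, rfl, rfl⟩

theorem single_mul_mul_single_eq_single_iff (hn : 0 < n) (a b : γ) (x : SymInvSg γ n) :
    single hn a a * x * single hn b b = single hn a b ↔ (a, b) ∈ x.graph := by
  constructor
  · intro h
    have hab : (a, b) ∈ (single hn a b : SymInvSg γ n).graph := rfl
    rw [← h, mem_graph_single_mul_mul_single] at hab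
    exact hab.2
  · intro h
    refine ext' (Set.ext fun p => ?_)
    rw [mem_graph_single_mul_mul_single, and_iff_left h]
    rfl

theorem single_mul_mul_single_eq_zero_iff (hn : 0 < n) (a b : γ) (x : SymInvSg γ n) :
    single hn a a * x * single hn b b = 0 ↔ (a, b) ∉ x.graph := by
  constructor
  · intro h hab
    have hmem := (mem_graph_single_mul_mul_single hn a b x (a, b)).2 ⟨rfl, hab⟩
    rw [h] at hmem
    exact hmem
  · intro h
    refine ext' (eq_empty_of_forall_notMem fun p hp => h ?_)
    exact ((mem_graph_single_mul_mul_single hn a b x p).1 hp).2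

theorem isClopen_mem_graph [TopologicalSpace (SymInvSg γ n)] [T1Space (SymInvSg γ n)]
    (hn : 0 < n) (hsc : ShiftContinuous (SymInvSg γ n)) (p : γ × γ) :
    IsClopen {x : SymInvSg γ n | p ∈ x.graph} := by
  obtain ⟨a, b⟩ := p
  have hcont : Continuous fun x : SymInvSg γ n => single hn a a * x * single hn b b :=
    (hsc (single hn b b)).2.comp (hsc (single hn a a)).1
  constructor
  · simpa only [preimage, mem_singleton_iff, single_mul_mul_single_eq_single_iff]
      using (isClosed_singleton (x := single hn a b)).preimage hcont
  · rw [← isClosed_compl_iff]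
    simpa only [preimage, mem_singleton_iff, single_mul_mul_single_eq_zero_iff, compl_ofPred]
      using (isClosed_singleton (x := (0 : SymInvSg γ n))).preimage hcont

/-- The graph of an element of `𝓘_γ^n`, as a point of `σₙ(2^(γ × γ))`.  It induces on `𝓘_γ^n` the
topology of pointwise convergence of graphs. -/
noncomputable def graphIndicator (x : SymInvSg γ n) : sigmaCube (γ × γ) n :=
  ⟨x.graph.boolIndicator, by
    simpa only [sigmaCube, mem_ofPred_eq, ← mem_iff_boolIndicator, ofPred_mem_eq,
      ← x.finite'.cast_ncard_eq, Nat.cast_le] using x.card_le'⟩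

theorem graphIndicator_apply_eq_iff {x y : SymInvSg γ n} {p : γ × γ} :
    (graphIndicator x).1 p = (graphIndicator y).1 p ↔ (p ∈ x.graph ↔ p ∈ y.graph) := by
  rw [Bool.eq_iff_iff]
  simp only [graphIndicator, ← mem_iff_boolIndicator]

theorem graphIndicator_injective :
    Function.Injective (graphIndicator : SymInvSg γ n → sigmaCube (γ × γ) n) := fun _ _ h =>
  ext' (Set.ext fun p => graphIndicator_apply_eq_iff.1 (congrFun (congrArg Subtype.val h) p))

theorem exists_rank_eq_and_graph_subset [Infinite γ] (x : SymInvSg γ n) {s : Set γ}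
    (hs : s.Finite) :
    ∃ y : SymInvSg γ n, y.rank = n ∧ x.graph ⊆ y.graph ∧
      ∀ p ∈ y.graph, p.1 ∈ s → p ∈ x.graph := by
  have hfield : (s ∪ (Prod.fst '' x.graph ∪ Prod.snd '' x.graph)).Finite :=
    hs.union ((x.finite'.image _).union (x.finite'.image _))
  obtain ⟨t, ht, htcard⟩ := hfield.infinite_compl.exists_subset_card_eq (n - x.rank)
  have hdom : ∀ {a b}, (a, b) ∈ x.graph → a ∉ t := fun h hat =>
    ht hat (Or.inr (Or.inl (mem_image_of_mem Prod.fst h)))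
  have hran : ∀ {a b}, (a, b) ∈ x.graph → b ∉ t := fun h hbt =>
    ht hbt (Or.inr (Or.inr (mem_image_of_mem Prod.snd h)))
  let d : Set (γ × γ) := (fun a => (a, a)) '' t
  have hd : d.Finite := t.finite_toSet.image _
  have hdisj : Disjoint x.graph d := by
    rw [disjoint_right]
    rintro _ ⟨a, ha, rfl⟩ hx
    exact hdom hx ha
  have hcard : (x.graph ∪ d).ncard = n := by
    have hdcard : d.ncard = n - x.rank := by
      rw [ncard_image_of_injective _ fun a b h => congrArg Prod.fst h, ncard_coe_finset, htcard]
    rw [ncard_union_eq hdisj x.finite' hd, hdcard]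
    exact Nat.add_sub_cancel' x.card_le'
  refine ⟨⟨x.graph ∪ d, ?_, x.finite'.union hd, hcard.le⟩, hcard, subset_union_left, ?_⟩
  · rintro a b a' b' (h | ⟨c, hc, ⟨⟩⟩) (h' | ⟨c', hc', ⟨⟩⟩)
    · exact x.inj' h h'
    · exact iff_of_false (fun e => hdom h (e ▸ hc')) fun e => hran h (e ▸ hc')
    · exact iff_of_false (fun e => hdom h' (e ▸ hc)) fun e => hran h' (e ▸ hc)
    · exact Iff.rfl
  · rintro p (hp | ⟨a, ha, rfl⟩) hps
    · exact hp
    · exact absurd (Or.inl hps) (ht ha)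

theorem graphIndicator_mem_closure_rank_eq [Infinite γ] (x : SymInvSg γ n) :
    graphIndicator x ∈ closure (graphIndicator '' {y : SymInvSg γ n | y.rank = n}) := by
  refine sigmaCube.mem_closure_iff.2 fun t ht => ?_
  obtain ⟨y, hy, hxy, hyx⟩ := exists_rank_eq_and_graph_subset x (ht.image Prod.fst)
  exact ⟨_, mem_image_of_mem _ hy, fun p hp => graphIndicator_apply_eq_iff.2
    ⟨fun h => hyx p h (mem_image_of_mem _ hp), fun h => hxy h⟩⟩

instance [Finite γ] : Finite (SymInvSg γ n) :=
  Finite.of_injective graph fun _ _ => ext'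

section PointwiseFiner

variable [TopologicalSpace (SymInvSg γ n)]

theorem continuous_graphIndicator (hclopen : ∀ p, IsClopen {x : SymInvSg γ n | p ∈ x.graph}) :
    Continuous (graphIndicator : SymInvSg γ n → sigmaCube (γ × γ) n) :=
  Continuous.subtype_mk
    (continuous_pi fun p => (continuous_boolIndicator_iff_isClopen _).2 (hclopen p)) _

theorem isOpen_singleton_of_rank_eq (hclopen : ∀ p, IsClopen {x : SymInvSg γ n | p ∈ x.graph})
    {x : SymInvSg γ n} (hx : x.rank = n) : IsOpen {x} := by
  have h : {x} = ⋂ p ∈ x.graph, {y : SymInvSg γ n | p ∈ y.graph} := by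
    ext y
    simp only [mem_singleton_iff, mem_iInter, mem_ofPred_eq]
    constructor
    · rintro rfl
      exact fun p hp => hp
    · intro hxy
      exact (ext' (eq_of_subset_of_ncard_le hxy (y.card_le'.trans hx.ge) y.finite')).symm
  rw [h]
  exact x.finite'.isOpen_biInter fun p _ => (hclopen p).isOpen

theorem compactSpace_of_feeblyOmegaBounded
    (hclopen : ∀ p, IsClopen {x : SymInvSg γ n | p ∈ x.graph})
    (hX : FeeblyOmegaBounded (SymInvSg γ n)) : CompactSpace (SymInvSg γ n) := by
  cases finite_or_infinite γ
  · infer_instance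
  · exact hX.compactSpace_of_continuous_injective (continuous_graphIndicator hclopen)
      graphIndicator_injective (fun _ => isOpen_singleton_of_rank_eq hclopen)
      graphIndicator_mem_closure_rank_eq

end PointwiseFiner

end SymInvSg

theorem compact_iff_omegaBoundedPracompact_iff_feeblyOmegaBounded_general
    {γ : Type*} {n : ℕ} [TopologicalSpace (SymInvSg γ n)]
    (hclopen : ∀ p, IsClopen {x : SymInvSg γ n | p ∈ x.graph}) :
    (CompactSpace (SymInvSg γ n) ↔ OmegaBoundedPracompact (SymInvSg γ n)) ∧
    (OmegaBoundedPracompact (SymInvSg γ n) ↔ FeeblyOmegaBounded (SymInvSg γ n)) := by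
  have compact_pracompact : CompactSpace (SymInvSg γ n) → OmegaBoundedPracompact (SymInvSg γ n) :=
    fun _ => OmegaBoundedPracompact.of_compactSpace _
  have feebly_compact := SymInvSg.compactSpace_of_feeblyOmegaBounded hclopen
  exact ⟨⟨compact_pracompact, fun h => feebly_compact h.feeblyOmegaBounded⟩,
    ⟨fun h => h.feeblyOmegaBounded, fun h => compact_pracompact (feebly_compact h)⟩⟩

/-- For a `T₁`-semitopological semigroup `𝓘_λ^n` (`n` a positive integer,
`λ` an infinite cardinal) the conditions "compact", "ω-bounded-pracompact" and
"feebly ω-bounded" are equivalent. -/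
theorem compact_iff_omegaBoundedPracompact_iff_feeblyOmegaBounded
    {γ : Type*} [Infinite γ] {n : ℕ} (hn : 0 < n)
    [TopologicalSpace (SymInvSg γ n)] [T1Space (SymInvSg γ n)]
    (hsc : ShiftContinuous (SymInvSg γ n)) :
    (CompactSpace (SymInvSg γ n) ↔ OmegaBoundedPracompact (SymInvSg γ n)) ∧
    (OmegaBoundedPracompact (SymInvSg γ n) ↔ FeeblyOmegaBounded (SymInvSg γ n)) :=
  compact_iff_omegaBoundedPracompact_iff_feeblyOmegaBounded_general
    (SymInvSg.isClopen_mem_graph hn hsc)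
end

section
/- Let n be a positive integer, λ an infinite cardinal, and A a countably infinite subset of λ, and suppose 𝓘_λ^n carries an ω-bounded-pracompact shift-continuous T₁-topology. For α ∈ 𝓘_A^n write ↑_≼^A α = ↑_≼ α ∩ 𝓘_A^n. Then for every α ∈ 𝓘_A^n the set ↑_≼^A α ∩ (𝓘_A^n ∖ 𝓘_A^{n−1}) is dense in the subspace ↑_≼^A α of 𝓘_A^n. -/
/-!
In a shift-continuous `T₁` topology every up-set `↑α` is clopen: it is the preimage of `α⁻¹` under
`x ↦ α⁻¹ x α⁻¹`, which is continuous and takes only finitely many values, since each of them is a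
relation between `ran α` and `dom α`. In particular the elements of rank `n`, being maximal, are
isolated.

An ω-bounded-pracompact space is feebly compact, and in a feebly compact space every sequence of
isolated points has a cluster point. Given `β ∈ 𝓘_A^n`, extend it by the identities of pairwise
disjoint subsets of `A`, of size `n - rank β` and disjoint from `dom β ∪ ran β`. The resulting `u₀,
u₁, …` have rank `n` and pairwise infimum `β`. A cluster point `x` of this sequence satisfies `β ≼
x` because `↑β` is closed, and `x ≼ uᵢ` for infinitely many `i` because `↑x` is a neighbourhood of
`x`; hence `x ≼ β`, and `β = x` is a limit of elements of rank `n`.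
-/

open Set Topology Filter

theorem isClopen_preimage_of_finite_range {X Y : Type*} [TopologicalSpace X] [TopologicalSpace Y]
    [T1Space Y] {f : X → Y} (hf : Continuous f) (hfin : (range f).Finite) (s : Set Y) :
    IsClopen (f ⁻¹' s) := by
  have : Finite (range f) := hfin
  exact (isClopen_discrete ((↑) ⁻¹' s : Set (range f))).preimage hf.rangeFactorization

theorem eq_of_mapClusterPt_cofinite_of_isGLB {ι P : Type*} [PartialOrder P] [TopologicalSpace P]
    {u : ι → P} {b x : P} (hx : MapClusterPt x cofinite u) (hb : IsClosed (Ici b))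
    (hopen : IsOpen (Ici x)) (hu : Pairwise fun i j => IsGLB {u i, u j} b) : x = b := by
  have hinf : {i | x ≤ u i}.Infinite :=
    frequently_cofinite_iff_infinite.1 (hx.frequently (hopen.mem_nhds self_mem_Ici))
  have hle (i : ι) : b ≤ u i := by
    obtain ⟨j, -, hji⟩ := hinf.nontrivial.exists_ne i
    exact (hu hji.symm).1 (mem_insert _ _)
  obtain ⟨i, hi, j, hj, hij⟩ := hinf.nontrivial
  refine le_antisymm ((hu hij).2 ?_) (hb.mem_of_mapClusterPt hx (Eventually.of_forall hle))
  rintro _ (rfl | rfl)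
  exacts [hi, hj]

theorem exists_pairwise_disjoint_finset_card_eq {γ : Type*} {S : Set γ} (hS : S.Infinite) (k : ℕ) :
    ∃ s : ℕ → Finset γ, (∀ i, (s i : Set γ) ⊆ S) ∧ (∀ i, (s i).card = k) ∧
      Pairwise fun i j => Disjoint (s i) (s j) := by
  let e : ℕ × Fin k ↪ S := (Encodable.encode' (ℕ × Fin k)).trans (hS.natEmbedding S)
  let g : ℕ × Fin k ↪ γ := e.trans (Function.Embedding.subtype _)
  refine ⟨fun i => Finset.univ.map ((Function.Embedding.sectR i (Fin k)).trans g), ?_, ?_, ?_⟩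
  · rintro i _ hx
    obtain ⟨j, -, rfl⟩ := Finset.mem_map.1 hx
    exact (e (i, j)).2
  · simp
  · intro i i' hii'
    simp only [Finset.disjoint_left, Finset.mem_map, Finset.mem_univ, true_and,
      Function.Embedding.trans_apply, Function.Embedding.sectR_apply]
    rintro _ ⟨j, rfl⟩ ⟨j', hj'⟩
    exact hii' (congrArg Prod.fst (g.injective hj')).symm

section FeeblyCompact

variable {X : Type*} [TopologicalSpace X]

theorem OmegaBoundedPracompact.feeblyCompact (h : OmegaBoundedPracompact X) :
    FeeblyCompact X := by
  obtain ⟨D, hD, hcpt⟩ := h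
  intro F hF hlf
  by_contra hinf
  choose d hdU hdD using fun U : F => hD.inter_open_nonempty U (hF U U.2).1 (hF U U.2).2
  let e : ℕ ↪ F := Set.Infinite.natEmbedding F hinf
  have hK : IsCompact (closure (range (d ∘ e))) :=
    hcpt _ (range_subset_iff.2 fun k => hdD (e k)) (countable_range _)
  refine infinite_range_of_injective e.injective
    ((hlf.finite_nonempty_inter_compact hK).subset ?_)
  rintro _ ⟨k, rfl⟩
  exact ⟨d (e k), hdU (e k), subset_closure ⟨k, rfl⟩⟩

theorem FeeblyCompact.finite_of_locallyFinite (h : FeeblyCompact X) {ι : Type*} {U : ι → Set X}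
    (hlf : LocallyFinite U) (hopen : ∀ i, IsOpen (U i)) (hne : ∀ i, (U i).Nonempty) :
    Finite ι := by
  have hrange : (range U).Finite :=
    h _ (forall_mem_range.2 fun i => ⟨hopen i, hne i⟩) hlf.on_range
  refine finite_univ_iff.1 (Finite.of_finite_fibers U (by rwa [image_univ]) ?_)
  rintro _ ⟨i, -, rfl⟩
  obtain ⟨x, hx⟩ := hne i
  exact (hlf.point_finite x).subset fun j ⟨_, (hj : U j = U i)⟩ => hj.ge hx

theorem FeeblyCompact.exists_mapClusterPt_cofinite (h : FeeblyCompact X) {ι : Type*} [Infinite ι]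
    {u : ι → X} (hu : ∀ i, IsOpen {u i}) : ∃ x, MapClusterPt x cofinite u := by
  by_contra! hno
  refine not_finite_iff_infinite.2 ‹Infinite ι› (h.finite_of_locallyFinite (U := fun i => {u i}) ?_
    hu fun i => singleton_nonempty _)
  intro x
  obtain ⟨t, ht, hfin⟩ : ∃ t ∈ 𝓝 x, {i | u i ∈ t}.Finite := by
    simpa [mapClusterPt_iff_frequently, frequently_cofinite_iff_infinite] using hno x
  exact ⟨t, ht, by simpa using hfin⟩

end FeeblyCompact

namespace SymInvSg

variable {γ : Type*} {n : ℕ}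

/-- The inverse in the inverse semigroup `𝓘_γ^n`: the inverse partial bijection. -/
instance : Inv (SymInvSg γ n) where
  inv a :=
    { graph := Prod.swap '' a.graph
      inj' := by
        rintro _ _ _ _ ⟨_, h, ⟨⟩⟩ ⟨_, h', ⟨⟩⟩
        exact (a.inj' h h').symm
      finite' := a.finite'.image _
      card_le' := (ncard_image_le a.finite').trans a.card_le' }

theorem mem_graph_inv {a : SymInvSg γ n} {x y : γ} : (x, y) ∈ a⁻¹.graph ↔ (y, x) ∈ a.graph := by
  simp [Inv.inv]

theorem le_iff_inv_mul_mul_inv_eq {a x : SymInvSg γ n} : a ≤ x ↔ a⁻¹ * x * a⁻¹ = a⁻¹ := by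
  constructor
  · intro h
    refine ext' (Set.ext ?_)
    rintro ⟨p, q⟩
    constructor
    · rintro ⟨y, ⟨u, hpu, huy⟩, hyq⟩
      obtain rfl : u = q := (x.inj' huy (h (mem_graph_inv.1 hyq))).2 rfl
      exact hpu
    · intro hpq
      exact ⟨p, ⟨q, hpq, h (mem_graph_inv.1 hpq)⟩, hpq⟩
  · rintro h ⟨u, v⟩ huv
    obtain ⟨y, ⟨w, hvw, hwy⟩, hyu⟩ : (v, u) ∈ (a⁻¹ * x * a⁻¹).graph := by
      rwa [h, mem_graph_inv]
    obtain rfl : w = u := (a.inj' (mem_graph_inv.1 hvw) huv).2 rfl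
    obtain rfl : y = v := (a.inj' (mem_graph_inv.1 hyu) huv).1 rfl
    exact hwy

theorem finite_range_mul_mul (a b : SymInvSg γ n) :
    (range fun x : SymInvSg γ n => a * x * b).Finite := by
  have hfin := ((a.finite'.image Prod.fst).prod (b.finite'.image Prod.snd)).finite_subsets
  refine Finite.of_finite_image (f := graph) (hfin.subset ?_) fun _ _ _ _ h => ext' h
  rintro _ ⟨_, ⟨x, rfl⟩, rfl⟩ ⟨p, q⟩ ⟨y, ⟨u, hpu, -⟩, hyq⟩
  exact ⟨⟨_, hpu, rfl⟩, ⟨_, hyq, rfl⟩⟩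

theorem isMax_of_rank_eq {a : SymInvSg γ n} (ha : a.rank = n) : IsMax a := fun x hax =>
  (eq_of_subset_of_ncard_le hax (x.card_le'.trans ha.ge) x.finite').ge

section ShiftContinuous

variable [TopologicalSpace (SymInvSg γ n)] [T1Space (SymInvSg γ n)]

theorem isClopen_Ici (hsc : ShiftContinuous (SymInvSg γ n)) (a : SymInvSg γ n) :
    IsClopen (Ici a) := by
  have hcont : Continuous fun x => a⁻¹ * x * a⁻¹ := (hsc a⁻¹).2.comp (hsc a⁻¹).1
  have hIci : Ici a = (fun x => a⁻¹ * x * a⁻¹) ⁻¹' {a⁻¹} :=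
    Set.ext fun _ => le_iff_inv_mul_mul_inv_eq
  rw [hIci]
  exact isClopen_preimage_of_finite_range hcont (finite_range_mul_mul _ _) _

theorem isOpen_singleton_of_rank_eq_s13 (hsc : ShiftContinuous (SymInvSg γ n)) {a : SymInvSg γ n}
    (ha : a.rank = n) : IsOpen {a} :=
  (isMax_of_rank_eq ha).Ici_eq ▸ (isClopen_Ici hsc a).isOpen

end ShiftContinuous

/-- The set `dom a ∪ ran a` of points on which the partial bijection `a` lives. -/
def support (a : SymInvSg γ n) : Set γ := Prod.fst '' a.graph ∪ Prod.snd '' a.graph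

theorem finite_support (a : SymInvSg γ n) : a.support.Finite :=
  (a.finite'.image _).union (a.finite'.image _)

theorem fst_mem_support {a : SymInvSg γ n} {x y : γ} (h : (x, y) ∈ a.graph) : x ∈ a.support :=
  Or.inl ⟨_, h, rfl⟩

theorem snd_mem_support {a : SymInvSg γ n} {x y : γ} (h : (x, y) ∈ a.graph) : y ∈ a.support :=
  Or.inr ⟨_, h, rfl⟩

theorem ncard_graph_union_diag (a : SymInvSg γ n) {s : Finset γ} (hs : Disjoint ↑s a.support) :
    (a.graph ∪ (fun x => (x, x)) '' (s : Set γ)).ncard = a.rank + s.card := by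
  have hdisj : Disjoint a.graph ((fun x => (x, x)) '' (s : Set γ)) := by
    rw [disjoint_left]
    rintro _ hp ⟨x, hx, rfl⟩
    exact disjoint_left.1 hs hx (fst_mem_support hp)
  rw [ncard_union_eq hdisj a.finite' (s.finite_toSet.image _),
    ncard_image_of_injective _ fun _ _ h => congrArg Prod.fst h, ncard_coe_finset, rank]

/-- The extension of the partial bijection `a` by the identity map of a finite set `s` disjoint
from its support, small enough for the rank to stay at most `n`. -/
def extendId (a : SymInvSg γ n) (s : Finset γ) (hs : Disjoint ↑s a.support)
    (hcard : a.rank + s.card ≤ n) : SymInvSg γ n where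
  graph := a.graph ∪ (fun x => (x, x)) '' s
  inj' := by
    rintro x y x' y' (h | ⟨_, hz, ⟨⟩⟩) (h' | ⟨_, hz', ⟨⟩⟩)
    · exact a.inj' h h'
    · exact iff_of_false (fun e => disjoint_left.1 hs hz' (e ▸ fst_mem_support h))
        fun e => disjoint_left.1 hs hz' (e ▸ snd_mem_support h)
    · exact iff_of_false (fun e => disjoint_left.1 hs hz (e ▸ fst_mem_support h'))
        fun e => disjoint_left.1 hs hz (e ▸ snd_mem_support h')
    · rfl
  finite' := a.finite'.union (s.finite_toSet.image _)
  card_le' := (ncard_graph_union_diag a hs).trans_le hcard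

section extendId

variable {a : SymInvSg γ n} {s t : Finset γ} {hs : Disjoint ↑s a.support}
  {ht : Disjoint ↑t a.support} {hscard : a.rank + s.card ≤ n} {htcard : a.rank + t.card ≤ n}

theorem le_extendId : a ≤ a.extendId s hs hscard :=
  subset_union_left

theorem rank_extendId : (a.extendId s hs hscard).rank = a.rank + s.card :=
  ncard_graph_union_diag a hs

theorem extendId_mem_restrictedTo {A : Set γ}
    (ha : a ∈ (restrictedTo A : Set (SymInvSg γ n))) (hsA : ↑s ⊆ A) :
    a.extendId s hs hscard ∈ (restrictedTo A : Set (SymInvSg γ n)) := by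
  rintro _ (h | ⟨x, hx, rfl⟩)
  exacts [ha _ h, ⟨hsA hx, hsA hx⟩]

theorem isGLB_extendId_extendId (hst : Disjoint s t) :
    IsGLB {a.extendId s hs hscard, a.extendId t ht htcard} a := by
  constructor
  · rintro _ (rfl | rfl) <;> exact le_extendId
  · intro c hc p hp
    rcases hc (mem_insert _ _) hp with h | ⟨x, hx, rfl⟩
    · exact h
    · rcases hc (mem_insert_of_mem _ rfl) hp with h | ⟨y, hy, hyx⟩
      · exact h
      · obtain rfl : y = x := congrArg Prod.fst hyx
        exact (Finset.disjoint_left.1 hst hx hy).elim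

end extendId

theorem exists_seq_rank_eq_pairwise_isGLB {A : Set γ} (hA : A.Infinite) {b : SymInvSg γ n}
    (hb : b ∈ (restrictedTo A : Set (SymInvSg γ n))) :
    ∃ u : ℕ → SymInvSg γ n,
      (∀ i, u i ∈ Ici b ∩ (restrictedTo A : Set (SymInvSg γ n))) ∧ (∀ i, (u i).rank = n) ∧
        Pairwise fun i j => IsGLB {u i, u j} b := by
  obtain ⟨s, hsub, hcard, hdisj⟩ :=
    exists_pairwise_disjoint_finset_card_eq (hA.sdiff b.finite_support) (n - b.rank)
  have hs (i : ℕ) : Disjoint ↑(s i) b.support := disjoint_left.2 fun _ hx => (hsub i hx).2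
  have hsum (i : ℕ) : b.rank + (s i).card = n := hcard i ▸ Nat.add_sub_cancel' b.card_le'
  refine ⟨fun i => b.extendId (s i) (hs i) (hsum i).le, fun i => ⟨le_extendId, ?_⟩,
    fun i => rank_extendId.trans (hsum i), fun i j hij => isGLB_extendId_extendId (hdisj hij)⟩
  exact extendId_mem_restrictedTo hb ((hsub i).trans sdiff_subset)

end SymInvSg

theorem dense_top_rank_in_upperSet_restrictedTo_general {γ : Type*} {n : ℕ}
    [TopologicalSpace (SymInvSg γ n)] [T1Space (SymInvSg γ n)]
    (hsc : ShiftContinuous (SymInvSg γ n)) (hfc : FeeblyCompact (SymInvSg γ n))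
    {A : Set γ} (hA : A.Infinite) (α : SymInvSg γ n) :
    Ici α ∩ SymInvSg.restrictedTo A ⊆
      closure ((Ici α ∩ SymInvSg.restrictedTo A) ∩ {β | β.rank = n}) := by
  rintro β ⟨hαβ, hβA⟩
  obtain ⟨u, hu, hrank, hglb⟩ := SymInvSg.exists_seq_rank_eq_pairwise_isGLB hA hβA
  obtain ⟨x, hx⟩ := hfc.exists_mapClusterPt_cofinite fun i =>
    SymInvSg.isOpen_singleton_of_rank_eq_s13 hsc (hrank i)
  obtain rfl : x = β := eq_of_mapClusterPt_cofinite_of_isGLB hx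
    (SymInvSg.isClopen_Ici hsc β).isClosed (SymInvSg.isClopen_Ici hsc x).isOpen hglb
  refine isClosed_closure.mem_of_mapClusterPt hx (Eventually.of_forall fun i => ?_)
  exact subset_closure ⟨⟨Ici_subset_Ici.2 hαβ (hu i).1, (hu i).2⟩, hrank i⟩

/-- If `𝓘_λ^n` is an ω-bounded-pracompact `T₁`-semitopological semigroup
(`n` a positive integer, `λ` an infinite cardinal) and `A ⊆ λ` is countably infinite, then
for every `α ∈ 𝓘_A^n` the set `↑_≼^A α ∩ (𝓘_A^n ∖ 𝓘_A^{n-1})` is dense in the subspace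
`↑_≼^A α = ↑_≼ α ∩ 𝓘_A^n`. -/
theorem dense_top_rank_in_upperSet_restrictedTo {γ : Type*} [Infinite γ] {n : ℕ}
    (hn : 0 < n)
    [TopologicalSpace (SymInvSg γ n)] [T1Space (SymInvSg γ n)]
    (hsc : ShiftContinuous (SymInvSg γ n))
    (hωb : OmegaBoundedPracompact (SymInvSg γ n))
    (A : Set γ) (hAc : A.Countable) (hAi : A.Infinite) :
    ∀ α ∈ (SymInvSg.restrictedTo A : Set (SymInvSg γ n)),
      (Set.Ici α ∩ SymInvSg.restrictedTo A) ⊆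
        closure ((Set.Ici α ∩ SymInvSg.restrictedTo A) ∩
          ((SymInvSg.restrictedTo A : Set (SymInvSg γ n)) \
            {β : SymInvSg γ n | SymInvSg.rank β ≤ n - 1})) := by
  intro α _
  refine (dense_top_rank_in_upperSet_restrictedTo_general hsc hωb.feeblyCompact hAi α).trans
    (closure_mono fun β ⟨hβ, (hrank : β.rank = n)⟩ => ⟨hβ, hβ.2, fun (hle : β.rank ≤ n - 1) => ?_⟩)
  omega
end
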